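/- arXiv:1810.01922 — 3 statements merged into one kernel-verified Lean document; each statement's English description precedes it below -/
import Mathlib

section
/- Let Γ be a weighted doubled graph such that every loop of Γ has weight 1. Then any two paths of Γ with the same source and the same target have equal weight; i.e., if σ and σ′ are paths with s(σ) = s(σ′) and t(σ) = t(σ′), then μ(σ) = μ(σ′). -/
/-- A weighted doubled graph: finite vertex set `V`, finite edge set `E`,
source and target maps, an edge involution `op` reversing direction, and a
positive edge weighting `μ` with `μ (op e) = (μ e)⁻¹`. -/
structure WDGraph (V E : Type) [Fintype V] [Fintype E] where
  s : E → V
  t : E → V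
  op : E → E
  op_op : ∀ e, op (op e) = e
  s_op : ∀ e, s (op e) = t e
  t_op : ∀ e, t (op e) = s e
  μ : E → ℝ
  μ_pos : ∀ e, 0 < μ e
  μ_op : ∀ e, μ (op e) = (μ e)⁻¹

namespace WDGraph

variable {V E : Type} [Fintype V] [Fintype E]

/-- A path in a weighted doubled graph: a nonempty list of consecutively
composable edges. -/
structure Path (G : WDGraph V E) where
  edges : List E
  ne : edges ≠ []
  chain : edges.Chain' (fun a b => G.t a = G.s b)

variable {G : WDGraph V E}

/-- The source of a path: the source of its first edge. -/
def Path.source (p : G.Path) : V := G.s (p.edges.head p.ne)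

/-- The target of a path: the target of its last edge. -/
def Path.target (p : G.Path) : V := G.t (p.edges.getLast p.ne)

/-- The weight of a path: the product of the weights of its edges. -/
def Path.weight (p : G.Path) : ℝ := (p.edges.map G.μ).prod

/-- A loop is a path whose source equals its target. -/
def Path.IsLoop (p : G.Path) : Prop := p.source = p.target

/-- A graph is connected if any two distinct vertices are joined by a path. -/
def Connected (G : WDGraph V E) : Prop :=
  ∀ v w : V, v ≠ w → ∃ p : G.Path, p.source = v ∧ p.target = w

/-- A set of edges is `op`-closed if it is stable under the edge involution. -/
def OpClosed (G : WDGraph V E) (F : Set E) : Prop := ∀ e ∈ F, G.op e ∈ F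

/-- A set of edges is loop-trivial if every loop all of whose edges lie in it
has weight `1`. -/
def LoopTrivial (G : WDGraph V E) (F : Set E) : Prop :=
  ∀ p : G.Path, (∀ e ∈ p.edges, e ∈ F) → p.IsLoop → p.weight = 1

end WDGraph

/-!
Following `σ` and then the opposite of `σ'` gives a loop. Passing to opposite edges inverts weights,
so this loop has weight `μ(σ) μ(σ')⁻¹`, and triviality of loops forces `μ(σ) = μ(σ')`.
-/

namespace WDGraph

variable {V E : Type} [Fintype V] [Fintype E] {G : WDGraph V E} {F : Set E}

namespace Path

/-- The concatenation of two composable paths. -/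
@[simps]
def append (p q : G.Path) (h : p.target = q.source) : G.Path where
  edges := p.edges ++ q.edges
  ne := List.append_ne_nil_of_left_ne_nil p.ne q.edges
  chain := p.chain.append q.chain fun x hx y hy => by
    rw [List.getLast?_eq_some_getLast p.ne, Option.mem_some_iff] at hx
    rw [List.head?_eq_some_head q.ne, Option.mem_some_iff] at hy
    rwa [← hx, ← hy]

/-- The opposite of a path: the opposite edges, traversed in reverse order. -/
@[simps]
def reverse (p : G.Path) : G.Path where
  edges := (p.edges.map G.op).reverse
  ne := by simpa using p.ne
  chain := List.isChain_reverse.2 <| (List.isChain_map _).2 <|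
    p.chain.imp fun x y hxy => by rw [G.t_op, G.s_op, hxy]

theorem source_append (p q : G.Path) (h : p.target = q.source) :
    (p.append q h).source = p.source := by
  simp only [source, append_edges, List.head_append_of_ne_nil p.ne]

theorem target_append (p q : G.Path) (h : p.target = q.source) :
    (p.append q h).target = q.target := by
  simp only [target, append_edges, List.getLast_append_of_ne_nil _ q.ne]

theorem source_reverse (p : G.Path) : p.reverse.source = p.target := by
  simp only [source, target, reverse_edges, List.head_reverse, List.getLast_map, G.s_op]

theorem target_reverse (p : G.Path) : p.reverse.target = p.source := by
  simp only [source, target, reverse_edges, List.getLast_reverse, List.head_map, G.t_op]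

theorem weight_append (p q : G.Path) (h : p.target = q.source) :
    (p.append q h).weight = p.weight * q.weight := by
  simp only [weight, append_edges, List.map_append, List.prod_append]

theorem weight_reverse (p : G.Path) : p.reverse.weight = p.weight⁻¹ := by
  have hop : G.μ ∘ G.op = Inv.inv ∘ G.μ := funext G.μ_op
  simp only [weight, reverse_edges, List.map_reverse, List.prod_reverse, List.prod_inv,
    List.map_map, hop]

theorem weight_pos (p : G.Path) : 0 < p.weight :=
  List.prod_pos <| List.forall_mem_map.2 fun e _ => G.μ_pos e

end Path

theorem OpClosed.mem_of_mem_edges_reverse (hF : G.OpClosed F) {p : G.Path}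
    (hp : ∀ e ∈ p.edges, e ∈ F) : ∀ e ∈ p.reverse.edges, e ∈ F := by
  simpa only [Path.reverse_edges, List.mem_reverse, List.forall_mem_map]
    using fun e he => hF e (hp e he)

end WDGraph

open WDGraph in
theorem weight_eq_of_same_endpoints_of_loops_trivial_general
    {V E : Type} [Fintype V] [Fintype E] {G : WDGraph V E} {F : Set E}
    (hF : G.OpClosed F) (h : G.LoopTrivial F) {σ σ' : G.Path}
    (hσ : ∀ e ∈ σ.edges, e ∈ F) (hσ' : ∀ e ∈ σ'.edges, e ∈ F)
    (hs : σ.source = σ'.source) (ht : σ.target = σ'.target) :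
    σ.weight = σ'.weight := by
  let p := σ.append σ'.reverse (ht.trans σ'.source_reverse.symm)
  have hp_mem : ∀ e ∈ p.edges, e ∈ F :=
    List.forall_mem_append.2 ⟨hσ, hF.mem_of_mem_edges_reverse hσ'⟩
  have hp_loop : p.IsLoop := by
    rw [Path.IsLoop, Path.source_append, Path.target_append, Path.target_reverse, hs]
  have hp_weight : σ.weight * σ'.weight⁻¹ = 1 := by
    rw [← Path.weight_reverse, ← Path.weight_append]
    exact h p hp_mem hp_loop
  exact (mul_inv_eq_one₀ σ'.weight_pos.ne').1 hp_weight

open WDGraph in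
/-- If every loop of a weighted doubled graph has weight `1`,
then any two paths with the same source and the same target have equal
weight. -/
theorem weight_eq_of_same_endpoints_of_loops_trivial
    {V E : Type} [Fintype V] [Fintype E] (G : WDGraph V E)
    (h : ∀ p : G.Path, p.IsLoop → p.weight = 1)
    (σ σ' : G.Path) (hs : σ.source = σ'.source) (ht : σ.target = σ'.target) :
    σ.weight = σ'.weight :=
  weight_eq_of_same_endpoints_of_loops_trivial_general (F := Set.univ)
    (fun _ _ => Set.mem_univ _) (fun p _ => h p)
    (fun _ _ => Set.mem_univ _) (fun _ _ => Set.mem_univ _) hs ht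
end

section
/- Let Γ be a connected weighted doubled graph and let F ⊆ E be an op-closed subset that is maximal (with respect to inclusion) among op-closed loop-trivial subsets of E. Then F is spanning and connected: for any two distinct vertices v, w ∈ V there exists a path in F with source v and target w. -/
/-!
A potential `φ : V → ℝ` with nowhere zero values makes the set of edges `e` with
`φ (s e) * μ e = φ (t e)` both `op`-closed and loop-trivial. Conversely, the edges of an `op`-closed
loop-trivial `F` are all balanced by some potential: fix a base vertex in each component of `F` and
let `φ v` be the weight of any walk in `F` from the base vertex to `v`. If some edge `e` joined two
different components of a maximal `F`, multiplying `φ` by a suitable constant on the component of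
`t e` would balance `e` as well and keep `F` balanced, so `e` would lie in `F` after all.
-/

namespace WDGraph

variable {V E : Type} [Fintype V] [Fintype E] {G : WDGraph V E} {F : Set E}

namespace Path

/-- The path consisting of a single edge. -/
def single (G : WDGraph V E) (e : E) : G.Path where
  edges := [e]
  ne := List.cons_ne_nil e []
  chain := List.isChain_singleton e

/-- The path obtained by prepending an edge to a path. -/
def cons (e : E) (p : G.Path) (h : G.t e = p.source) : G.Path where
  edges := e :: p.edges
  ne := List.cons_ne_nil e p.edges
  chain := p.chain.cons_of_ne_nil p.ne h

lemma target_cons (e : E) (p : G.Path) (h : G.t e = p.source) : (cons e p h).target = p.target :=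
  congrArg G.t (List.getLast_cons p.ne)

lemma weight_single (e : E) : (single G e).weight = G.μ e :=
  List.prod_singleton

lemma weight_cons (e : E) (p : G.Path) (h : G.t e = p.source) :
    (cons e p h).weight = G.μ e * p.weight :=
  List.prod_cons

@[elab_as_elim]
theorem induction {motive : G.Path → Prop} (single : ∀ e, motive (single G e))
    (cons : ∀ e p h, motive p → motive (cons e p h)) (p : G.Path) : motive p := by
  obtain ⟨l, hne, hchain⟩ := p
  induction l with
  | nil => exact absurd rfl hne
  | cons e l ih =>
    cases l with
    | nil => exact single e
    | cons f l =>
      obtain ⟨hef, hl⟩ := List.isChain_cons_cons.1 hchain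
      exact cons e ⟨f :: l, List.cons_ne_nil f l, hl⟩ hef (ih _ hl)

end Path

/-- `G.HasWalk F u v x` says that there is a possibly empty walk from `u` to `v` of weight `x` with
all edges in `F`. Unlike `WDGraph.Path` it admits empty walks, which have weight `1`. -/
inductive HasWalk (G : WDGraph V E) (F : Set E) : V → V → ℝ → Prop
  | nil (v : V) : HasWalk G F v v 1
  | cons {e : E} {v : V} {x : ℝ} (he : e ∈ F) (h : HasWalk G F (G.t e) v x) :
      HasWalk G F (G.s e) v (G.μ e * x)

namespace HasWalk

variable {u v w : V} {x y : ℝ}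

lemma single {e : E} (he : e ∈ F) : G.HasWalk F (G.s e) (G.t e) (G.μ e) := by
  simpa only [mul_one] using cons he (nil (G.t e))

lemma trans (h : G.HasWalk F u v x) (h' : G.HasWalk F v w y) : G.HasWalk F u w (x * y) := by
  induction h with
  | nil v => rwa [one_mul]
  | cons he _ ih =>
    rw [mul_assoc]
    exact cons he (ih h')

lemma symm (hF : G.OpClosed F) (h : G.HasWalk F u v x) : G.HasWalk F v u x⁻¹ := by
  induction h with
  | nil v => simpa only [inv_one] using nil v
  | @cons e _ _ he _ ih =>
    have hop : G.HasWalk F (G.t e) (G.s e) (G.μ e)⁻¹ := by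
      simpa only [G.s_op, G.t_op, G.μ_op] using single (G := G) (hF e he)
    rw [mul_inv_rev]
    exact ih.trans hop

lemma weight_ne_zero (h : G.HasWalk F u v x) : x ≠ 0 := by
  induction h with
  | nil => exact one_ne_zero
  | cons _ _ ih => exact mul_ne_zero (G.μ_pos _).ne' ih

lemma eq_or_exists_path (h : G.HasWalk F u v x) :
    (u = v ∧ x = 1) ∨
      ∃ p : G.Path, (∀ e ∈ p.edges, e ∈ F) ∧ p.source = u ∧ p.target = v ∧ p.weight = x := by
  induction h with
  | nil v => exact Or.inl ⟨rfl, rfl⟩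
  | @cons e _ _ he _ ih =>
    right
    rcases ih with ⟨rfl, rfl⟩ | ⟨p, hp, hsource, rfl, rfl⟩
    · exact ⟨Path.single G e, List.forall_mem_singleton.2 he, rfl, rfl, by
        rw [Path.weight_single, mul_one]⟩
    · exact ⟨Path.cons e p hsource.symm, List.forall_mem_cons.2 ⟨he, hp⟩, rfl,
        Path.target_cons .., Path.weight_cons ..⟩

lemma weight_eq_one (hF : G.LoopTrivial F) (h : G.HasWalk F v v x) : x = 1 := by
  rcases h.eq_or_exists_path with ⟨_, hx⟩ | ⟨p, hp, hsource, htarget, hx⟩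
  · exact hx
  · exact hx.symm.trans (hF p hp (hsource.trans htarget.symm))

lemma weight_unique (hop : G.OpClosed F) (htriv : G.LoopTrivial F)
    (hx : G.HasWalk F u v x) (hy : G.HasWalk F u v y) : x = y :=
  (mul_inv_eq_one₀ hy.weight_ne_zero).1 ((hx.trans (hy.symm hop)).weight_eq_one htriv)

end HasWalk

/-- `G.Reachable F u v` says that `u` and `v` are joined by a possibly empty walk in `F`; for
`op`-closed `F` its classes are the connected components of the subgraph with edge set `F`. -/
def Reachable (G : WDGraph V E) (F : Set E) (u v : V) : Prop := ∃ x, G.HasWalk F u v x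

namespace Reachable

variable {u v w : V}

lemma refl (v : V) : G.Reachable F v v := ⟨1, .nil v⟩

lemma of_mem {e : E} (he : e ∈ F) : G.Reachable F (G.s e) (G.t e) := ⟨G.μ e, .single he⟩

lemma trans : G.Reachable F u v → G.Reachable F v w → G.Reachable F u w
  | ⟨_, h⟩, ⟨_, h'⟩ => ⟨_, h.trans h'⟩

lemma symm (hF : G.OpClosed F) : G.Reachable F u v → G.Reachable F v u
  | ⟨_, h⟩ => ⟨_, h.symm hF⟩

lemma exists_path (h : G.Reachable F u v) (huv : u ≠ v) :
    ∃ p : G.Path, (∀ e ∈ p.edges, e ∈ F) ∧ p.source = u ∧ p.target = v := by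
  obtain ⟨_, hx⟩ := h
  obtain ⟨heq, _⟩ | ⟨p, hp, hsource, htarget, _⟩ := hx.eq_or_exists_path
  · exact absurd heq huv
  · exact ⟨p, hp, hsource, htarget⟩

end Reachable

lemma Path.reachable (hF : ∀ e, G.Reachable F (G.s e) (G.t e)) (p : G.Path) :
    G.Reachable F p.source p.target := by
  induction p using Path.induction with
  | single e => exact hF e
  | cons e p h ih =>
    rw [Path.target_cons]
    exact (hF e).trans (h ▸ ih)

/-- The setoid on vertices whose classes are the connected components of an `op`-closed `F`; it
provides the base vertices of potentials. -/
def reachableSetoid (hF : G.OpClosed F) : Setoid V where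
  r := G.Reachable F
  iseqv := ⟨Reachable.refl, Reachable.symm hF, Reachable.trans⟩

/-- The edges balanced by a potential `φ`: those along which `φ` is multiplied by the edge weight.
When `φ` vanishes nowhere, these are the edges `e` with `μ e = φ (t e) / φ (s e)`. -/
def balancedEdges (G : WDGraph V E) (φ : V → ℝ) : Set E := {e | φ (G.s e) * G.μ e = φ (G.t e)}

lemma opClosed_balancedEdges (φ : V → ℝ) : G.OpClosed (G.balancedEdges φ) := by
  intro e (he : φ (G.s e) * G.μ e = φ (G.t e))
  change φ (G.s (G.op e)) * G.μ (G.op e) = φ (G.t (G.op e))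
  rw [G.s_op, G.t_op, G.μ_op, ← he, mul_inv_cancel_right₀ (G.μ_pos e).ne']

lemma Path.potential_mul_weight {φ : V → ℝ} (p : G.Path)
    (hp : ∀ e ∈ p.edges, e ∈ G.balancedEdges φ) : φ p.source * p.weight = φ p.target := by
  induction p using Path.induction with
  | single e =>
    rw [Path.weight_single]
    exact hp e List.mem_cons_self
  | cons e p h ih =>
    obtain ⟨he, hp⟩ := List.forall_mem_cons.1 hp
    calc φ (G.s e) * (cons e p h).weight
        = φ (G.s e) * G.μ e * p.weight := by rw [Path.weight_cons, mul_assoc]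
      _ = φ p.source * p.weight := by rw [← h, show φ (G.s e) * G.μ e = φ (G.t e) from he]
      _ = φ (cons e p h).target := by rw [ih hp, Path.target_cons]

lemma loopTrivial_balancedEdges {φ : V → ℝ} (hφ : ∀ v, φ v ≠ 0) :
    G.LoopTrivial (G.balancedEdges φ) := by
  intro p hp (hloop : p.source = p.target)
  have hweight : φ p.source * p.weight = φ p.source := by rw [p.potential_mul_weight hp, hloop]
  exact (mul_eq_left₀ (hφ p.source)).1 hweight

theorem LoopTrivial.exists_subset_balancedEdges (htriv : G.LoopTrivial F) (hop : G.OpClosed F) :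
    ∃ φ : V → ℝ, (∀ v, φ v ≠ 0) ∧ F ⊆ G.balancedEdges φ := by
  let base (v : V) : V := (Quotient.mk (reachableSetoid hop) v).out
  have hbase (v : V) : G.Reachable F (base v) v := Quotient.mk_out (s := reachableSetoid hop) v
  choose φ hφ using hbase
  refine ⟨φ, fun v => (hφ v).weight_ne_zero, fun e he => ?_⟩
  have base_eq : base (G.s e) = base (G.t e) :=
    congrArg Quotient.out (Quotient.sound (s := reachableSetoid hop) (Reachable.of_mem he))
  have hwalk : G.HasWalk F (base (G.t e)) (G.t e) (φ (G.s e) * G.μ e) :=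
    base_eq ▸ (hφ (G.s e)).trans (.single he)
  exact hwalk.weight_unique hop htriv (hφ (G.t e))

lemma subset_balancedEdges_mul {c φ : V → ℝ} (hc : ∀ e ∈ F, c (G.s e) = c (G.t e))
    (hφ : F ⊆ G.balancedEdges φ) : F ⊆ G.balancedEdges (c * φ) := by
  intro e he
  change c (G.s e) * φ (G.s e) * G.μ e = c (G.t e) * φ (G.t e)
  rw [mul_assoc, show φ (G.s e) * G.μ e = φ (G.t e) from hφ he, hc e he]

lemma exists_potential_balancing_edge (hop : G.OpClosed F) {φ : V → ℝ} (hφ : ∀ v, φ v ≠ 0)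
    (hF : F ⊆ G.balancedEdges φ) {e : E} (he : ¬ G.Reachable F (G.s e) (G.t e)) :
    ∃ ψ : V → ℝ, (∀ v, ψ v ≠ 0) ∧ F ⊆ G.balancedEdges ψ ∧ e ∈ G.balancedEdges ψ := by
  classical
  let k : ℝ := φ (G.s e) * G.μ e / φ (G.t e)
  let c (v : V) : ℝ := if G.Reachable F v (G.t e) then k else 1
  have hk : k ≠ 0 := div_ne_zero (mul_ne_zero (hφ _) (G.μ_pos e).ne') (hφ _)
  have hc : ∀ v, c v ≠ 0 := fun v => by
    dsimp only [c]
    split_ifs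
    exacts [hk, one_ne_zero]
  have hc_const : ∀ f ∈ F, c (G.s f) = c (G.t f) := fun f hf =>
    if_congr ⟨((Reachable.of_mem hf).symm hop).trans, (Reachable.of_mem hf).trans⟩ rfl rfl
  refine ⟨c * φ, fun v => mul_ne_zero (hc v) (hφ v), subset_balancedEdges_mul hc_const hF, ?_⟩
  have hc_source : c (G.s e) = 1 := if_neg he
  have hc_target : c (G.t e) = k := if_pos (Reachable.refl _)
  change c (G.s e) * φ (G.s e) * G.μ e = c (G.t e) * φ (G.t e)
  rw [hc_source, hc_target, one_mul, div_mul_cancel₀ _ (hφ _)]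

theorem reachable_of_maximal (hF : Maximal (fun F' => G.OpClosed F' ∧ G.LoopTrivial F') F)
    (e : E) : G.Reachable F (G.s e) (G.t e) := by
  by_contra he
  obtain ⟨hop, htriv⟩ := hF.prop
  obtain ⟨φ, hφ, hFφ⟩ := htriv.exists_subset_balancedEdges hop
  obtain ⟨ψ, hψ, hFψ, heψ⟩ := exists_potential_balancing_edge hop hφ hFφ he
  have hψF : G.balancedEdges ψ ⊆ F :=
    hF.le_of_ge ⟨opClosed_balancedEdges ψ, loopTrivial_balancedEdges hψ⟩ hFψ
  exact he (Reachable.of_mem (hψF heψ))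

end WDGraph

open WDGraph in
/-- In a connected weighted doubled graph, a maximal
`op`-closed loop-trivial set of edges `F` is spanning and connected: any two
distinct vertices are joined by a path all of whose edges lie in `F`. -/
theorem maximal_loopTrivial_subgraph_spanning_connected
    {V E : Type} [Fintype V] [Fintype E] (G : WDGraph V E)
    (hconn : G.Connected) (F : Set E)
    (hFop : G.OpClosed F) (hFtriv : G.LoopTrivial F)
    (hmax : ∀ F' : Set E, G.OpClosed F' → G.LoopTrivial F' → F ⊆ F' → F = F')
    (v w : V) (hvw : v ≠ w) :
    ∃ p : G.Path, (∀ e ∈ p.edges, e ∈ F) ∧ p.source = v ∧ p.target = w := by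
  have hF : Maximal (fun F' => G.OpClosed F' ∧ G.LoopTrivial F') F :=
    ⟨⟨hFop, hFtriv⟩, fun F' hF' hle => (hmax F' hF'.1 hF'.2 hle).ge⟩
  obtain ⟨p, rfl, rfl⟩ := hconn v w hvw
  exact (p.reachable (reachable_of_maximal hF)).exists_path hvw
end

section
/- Let λ₀ ∈ (0,1) and let x ∈ (0,1). Suppose that x is not of the form λ₀^ℓ·(1 − λ₀^k) for any integers ℓ ≥ 0 and k ≥ 1. Then there exist integers ℓ ≥ 0, k ≥ 0 and a real number t ∈ (0,1) such that x = (1−t)·λ₀^ℓ·(1−λ₀) + ∑_{j=1}^{k} λ₀^{ℓ+j}·(1−λ₀) + t·λ₀^{ℓ+k+1}·(1−λ₀); equivalently, there exist integers ℓ ≥ 0 and k ≥ 0 with λ₀^{ℓ+1}·(1 − λ₀^{k+1}) < x < λ₀^ℓ·(1 − λ₀^{k+1}). -/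
/-!
Choose `ℓ` with `λ₀ ^ (ℓ + 1) ≤ x < λ₀ ^ ℓ`. As `k → ∞`, the numbers
`λ₀ ^ (ℓ + 1) * (1 - λ₀ ^ (k + 1))` and `λ₀ ^ ℓ * (1 - λ₀ ^ (k + 1))` increase to `λ₀ ^ (ℓ + 1)` and
`λ₀ ^ ℓ` without reaching them, so they enclose `x` strictly as soon as `k` is large. The expression to
be matched with `x` is affine in `t` and telescopes to these two numbers at `t = 1` and `t = 0`.
-/

theorem sum_range_pow_add_succ_mul_one_sub {R : Type*} [CommRing R] (r : R) (l k : ℕ) :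
    ∑ j ∈ Finset.range k, r ^ (l + j + 1) * (1 - r) = r ^ (l + 1) * (1 - r ^ k) := by
  calc
    ∑ j ∈ Finset.range k, r ^ (l + j + 1) * (1 - r)
        = r ^ (l + 1) * ((∑ j ∈ Finset.range k, r ^ j) * (1 - r)) := by
      rw [Finset.sum_mul, Finset.mul_sum]
      exact Finset.sum_congr rfl fun j _ ↦ by ring
    _ = r ^ (l + 1) * (1 - r ^ k) := by rw [geom_sum_mul_neg]

theorem weighted_geom_sum_eq_affine_combination {R : Type*} [CommRing R] (r t : R) (l k : ℕ) :
    (1 - t) * r ^ l * (1 - r) + (∑ j ∈ Finset.range k, r ^ (l + j + 1) * (1 - r))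
        + t * r ^ (l + k + 1) * (1 - r)
      = (1 - t) * (r ^ l * (1 - r ^ (k + 1))) + t * (r ^ (l + 1) * (1 - r ^ (k + 1))) := by
  rw [sum_range_pow_add_succ_mul_one_sub]
  ring

section OrderedField

variable {K : Type*} [Field K] [LinearOrder K] [IsStrictOrderedRing K]

theorem exists_affine_combination_eq_of_lt_of_lt {a b x : K} (hax : a < x) (hxb : x < b) :
    ∃ t : K, 0 < t ∧ t < 1 ∧ x = (1 - t) * b + t * a := by
  have hx : x ∈ openSegment K a b := by
    rw [openSegment_eq_Ioo (hax.trans hxb)]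
    exact ⟨hax, hxb⟩
  obtain ⟨t, s, ht, hs, hts, rfl⟩ := hx
  refine ⟨t, ht, by linarith, ?_⟩
  rw [← hts, smul_eq_mul, smul_eq_mul]
  ring

variable [Archimedean K]

theorem exists_pow_succ_le_and_lt_pow {r x : K} (hr : r < 1) (hx0 : 0 < x) (hx1 : x < 1) :
    ∃ l : ℕ, r ^ (l + 1) ≤ x ∧ x < r ^ l := by
  obtain ⟨n, hn⟩ := exists_pow_lt_of_lt_one hx0 hr
  by_contra! h
  have lt_pow : ∀ m : ℕ, x < r ^ m := by
    intro m
    induction m with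
    | zero => simpa only [pow_zero] using hx1
    | succ m ih => exact lt_of_not_ge fun hm ↦ (h m hm).not_gt ih
  exact (lt_pow n).not_gt hn

theorem exists_lt_mul_one_sub_pow_succ {a r x : K} (ha : 0 < a) (hr0 : 0 ≤ r) (hr1 : r < 1)
    (hxa : x < a) : ∃ k : ℕ, x < a * (1 - r ^ (k + 1)) := by
  obtain ⟨k, hk⟩ := exists_pow_lt_of_lt_one (sub_pos.2 ((div_lt_one ha).2 hxa)) hr1
  refine ⟨k, (div_lt_iff₀' ha).1 ?_⟩
  have hpow : r ^ (k + 1) ≤ r ^ k := pow_le_pow_of_le_one hr0 hr1.le k.le_succ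
  linarith

theorem exists_pow_mul_one_sub_pow_lt_and_lt {r x : K} (hr0 : 0 < r) (hr1 : r < 1)
    (hx0 : 0 < x) (hx1 : x < 1) :
    ∃ l k : ℕ, r ^ (l + 1) * (1 - r ^ (k + 1)) < x ∧ x < r ^ l * (1 - r ^ (k + 1)) := by
  obtain ⟨l, hle, hlt⟩ := exists_pow_succ_le_and_lt_pow hr1 hx0 hx1
  obtain ⟨k, hk⟩ := exists_lt_mul_one_sub_pow_succ (pow_pos hr0 l) hr0.le hr1 hlt
  refine ⟨l, k, ?_, hk⟩
  calc
    r ^ (l + 1) * (1 - r ^ (k + 1)) < r ^ (l + 1) :=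
      mul_lt_of_lt_one_right (pow_pos hr0 _) (sub_lt_self 1 (pow_pos hr0 _))
    _ ≤ x := hle

theorem exists_level_and_parameter_general {lam x : K} (h0 : 0 < lam) (h1 : lam < 1)
    (hx0 : 0 < x) (hx1 : x < 1) :
    ∃ l k : ℕ, ∃ t : K, 0 < t ∧ t < 1 ∧
      x = (1 - t) * lam ^ l * (1 - lam)
          + (∑ j ∈ Finset.range k, lam ^ (l + j + 1) * (1 - lam))
          + t * lam ^ (l + k + 1) * (1 - lam) ∧
      lam ^ (l + 1) * (1 - lam ^ (k + 1)) < x ∧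
      x < lam ^ l * (1 - lam ^ (k + 1)) := by
  obtain ⟨l, k, hlower, hupper⟩ := exists_pow_mul_one_sub_pow_lt_and_lt h0 h1 hx0 hx1
  obtain ⟨t, ht0, ht1, hx⟩ := exists_affine_combination_eq_of_lt_of_lt hlower hupper
  refine ⟨l, k, t, ht0, ht1, ?_, hlower, hupper⟩
  rwa [weighted_geom_sum_eq_affine_combination]

end OrderedField

/-- If `λ₀ ∈ (0,1)` and `x ∈ (0,1)` is not of the form
`λ₀ ^ ℓ * (1 - λ₀ ^ k)` for integers `ℓ ≥ 0`, `k ≥ 1`, then there are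
`ℓ, k ≥ 0` and `t ∈ (0,1)` with
`x = (1 - t) * λ₀ ^ ℓ * (1 - λ₀) + ∑_{j=1}^{k} λ₀ ^ (ℓ + j) * (1 - λ₀)
    + t * λ₀ ^ (ℓ + k + 1) * (1 - λ₀)`;
equivalently, `λ₀ ^ (ℓ + 1) * (1 - λ₀ ^ (k + 1)) < x < λ₀ ^ ℓ * (1 - λ₀ ^ (k + 1))`. -/
theorem exists_level_and_parameter
    (lam x : ℝ) (h0 : 0 < lam) (h1 : lam < 1) (hx0 : 0 < x) (hx1 : x < 1)
    (hnot : ∀ l k : ℕ, 1 ≤ k → x ≠ lam ^ l * (1 - lam ^ k)) :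
    ∃ l k : ℕ, ∃ t : ℝ, 0 < t ∧ t < 1 ∧
      x = (1 - t) * lam ^ l * (1 - lam)
          + (∑ j ∈ Finset.range k, lam ^ (l + j + 1) * (1 - lam))
          + t * lam ^ (l + k + 1) * (1 - lam) ∧
      lam ^ (l + 1) * (1 - lam ^ (k + 1)) < x ∧
      x < lam ^ l * (1 - lam ^ (k + 1)) :=
  exists_level_and_parameter_general h0 h1 hx0 hx1
end
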